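/- The smallest dimension of a faithful complex linear representation of the symmetric group 𝔖ₙ (n ≥ 5, or more simply n ≥ 2 with appropriate care) is n − 1. In particular, 𝔖ₙ has no faithful representation of dimension less than n − 1 for n ≥ 5. -/

import Mathlib

/-!
STATEMENT 13: For `n ≥ 5`, the smallest dimension of a faithful complex linear
representation of the symmetric group `𝔖ₙ` is `n − 1`: there is no faithful representation
of dimension `< n − 1`, and the bound is achieved (by the standard representation).
-/

open Matrix

/-!
If the operators `1 - ρ (x y)` have rank one and differ for different transpositions, then two of
them multiply to zero when the transpositions commute and satisfy `A * B * A = A` when they do not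
(the Temperley–Lieb relations). Hence the sum `T` of all of them satisfies `T * T = (2 * n) • T`,
so that `T / (2 * n)` is an idempotent, of rank `trace T / (2 * n) = n - 1`.

If this applies neither to `ρ` nor to its twist by the sign character, both eigenspaces of
`ρ (x y)` have dimension at least two. If the whole dimension is less than `n - 1`, they therefore
have dimension less than `n - 3`, and by induction two different transpositions of the other
`n - 2` points act equally on one eigenspace, and two on the other. Up to conjugation these may be
taken to be any two disjoint transpositions, the same ones for both eigenspaces, so that `ρ` is not
injective.
-/

section RankOne

open LinearMap Module

variable {K V : Type*} [Field K] [AddCommGroup V] [Module K V]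

theorem exists_eq_smulRight_of_finrank_range_le_one {W : Type*} [AddCommGroup W] [Module K W]
    [Module.Finite K V] {A : V →ₗ[K] W} (hA : finrank K (range A) ≤ 1) :
    ∃ (f : V →ₗ[K] K) (a : W), A = f.smulRight a := by
  obtain ⟨u, hu⟩ := finrank_le_one_iff.mp hA
  obtain ⟨f, hf⟩ := projective_lifting_property (toSpanSingleton K _ u) A.rangeRestrict hu
  refine ⟨f, u, LinearMap.ext fun v => ?_⟩
  simpa using congrArg Subtype.val (LinearMap.congr_fun hf v).symm

variable [Module.Finite K V] {A B : End K V}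

theorem mul_mul_eq_trace_smul_of_rank_le_one (hA : finrank K (range A) ≤ 1) (X : End K V) :
    A * X * A = trace K V (A * X) • A := by
  obtain ⟨f, a, rfl⟩ := exists_eq_smulRight_of_finrank_range_le_one hA
  have hcomp : f.smulRight a * X = (f ∘ₗ X).smulRight a := rfl
  rw [hcomp, trace_smulRight]
  ext v
  simp [smul_smul, mul_comm]

theorem trace_eq_two_of_rank_le_one (hA : finrank K (range A) ≤ 1) (hA2 : A * A = (2 : K) • A)
    (hA0 : A ≠ 0) : trace K V A = 2 :=
  smul_left_injective K hA0 <| by simpa [hA2] using (mul_mul_eq_trace_smul_of_rank_le_one hA 1).symm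

theorem mul_eq_zero_of_commute_of_rank_le_one [NeZero (2 : K)] (hA : finrank K (range A) ≤ 1)
    (hB : finrank K (range B) ≤ 1) (hA2 : A * A = (2 : K) • A) (hB2 : B * B = (2 : K) • B)
    (hAB : Commute A B) (hne : A ≠ B) : A * B = 0 := by
  have hA' : (2 : K) • (A * B) = trace K V (A * B) • A := by
    rw [← mul_mul_eq_trace_smul_of_rank_le_one hA, hAB.eq, mul_assoc, hA2, mul_smul_comm]
  have hB' : (2 : K) • (A * B) = trace K V (A * B) • B := by
    rw [trace_mul_comm, ← mul_mul_eq_trace_smul_of_rank_le_one hB, ← hAB.eq, mul_assoc, hB2,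
      mul_smul_comm]
  have htr : trace K V (A * B) = 0 := by
    by_contra h
    exact hne (smul_right_injective _ h (hA'.symm.trans hB'))
  simpa [htr, NeZero.ne] using hA'

-- Both sides of the braid relation expand to the same terms except for `A - A * B * A` and
-- `B - B * A * B`, and these are the multiples of `A` and `B` by the same scalar.
theorem mul_mul_eq_self_of_braid_of_rank_le_one (hA : finrank K (range A) ≤ 1)
    (hB : finrank K (range B) ≤ 1) (hA2 : A * A = (2 : K) • A) (hB2 : B * B = (2 : K) • B)
    (hAB : (1 - A) * (1 - B) * (1 - A) = (1 - B) * (1 - A) * (1 - B)) (hne : A ≠ B) :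
    A * B * A = A := by
  have expand (X Y : End K V) (hX : X * X = (2 : K) • X) :
      (1 - X) * (1 - Y) * (1 - X) = 1 - Y + X * Y + Y * X - X * Y * X := by
    calc (1 - X) * (1 - Y) * (1 - X)
        = 1 - Y + X * Y + Y * X - X * Y * X + (X * X - (2 : K) • X) := by
          rw [two_smul]; noncomm_ring
      _ = _ := by rw [hX, sub_self, add_zero]
  have hdiff : A - A * B * A = B - B * A * B := by
    rw [expand A B hA2, expand B A hB2] at hAB
    rw [← sub_eq_zero] at hAB ⊢
    rw [← hAB]
    abel
  rw [mul_mul_eq_trace_smul_of_rank_le_one hA, mul_mul_eq_trace_smul_of_rank_le_one hB,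
    trace_mul_comm K B] at hdiff
  have htr : 1 - trace K V (A * B) = 0 := by
    by_contra h
    exact hne (smul_right_injective _ h (by simpa [sub_smul] using hdiff))
  rw [mul_mul_eq_trace_smul_of_rank_le_one hA, ← sub_eq_zero.mp htr, one_smul]

theorem finrank_range_add_finrank_range_le_of_mul_eq_zero (h : A * B = 0) :
    finrank K (range A) + finrank K (range B) ≤ finrank K V := by
  have hle := Submodule.finrank_mono (range_le_ker_iff.mpr h)
  have := finrank_range_add_finrank_ker A
  omega

theorem finrank_range_one_sub_add_finrank_range_one_add_le (hA : A * A = 1) :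
    finrank K (range (1 - A)) + finrank K (range (1 + A)) ≤ finrank K V := by
  refine finrank_range_add_finrank_range_le_of_mul_eq_zero ?_
  rw [← (Commute.one_left A).mul_self_sub_mul_self_eq', hA, mul_one, sub_self]

end RankOne

section Swaps

open Equiv Equiv.Perm

variable {α M : Type*} [Monoid M]

theorem exists_perm_map_eq_of_nodup {l l' : List α} (hl : l.Nodup) (hl' : l'.Nodup)
    (hlen : l.length = l'.length) : ∃ σ : Perm α, l.map σ = l' := by
  obtain ⟨σ, hσ⟩ := Perm.exists_extending_pair l.get (l'.get ∘ Fin.cast hlen)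
    (List.nodup_iff_injective_get.mp hl)
    ((List.nodup_iff_injective_get.mp hl').comp (Fin.cast_injective hlen))
  refine ⟨σ, List.ext_get (by simpa) fun i h _ => ?_⟩
  simpa using hσ ⟨i, by simpa using h⟩

variable [DecidableEq α] {φ : Perm α →* M}

theorem swap_ne_swap_of_ne_of_ne {a b c d : α} (hab : a ≠ b) (hac : a ≠ c) (had : a ≠ d) :
    swap a b ≠ swap c d := fun h => hab <| by
  simpa [swap_apply_of_ne_of_ne hac had] using (congrArg (· a) h).symm

theorem map_swap_apply_eq_of_map_swap_eq {x y z w : α} (h : φ (swap x y) = φ (swap z w))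
    (σ : Perm α) : φ (swap (σ x) (σ y)) = φ (swap (σ z) (σ w)) := by
  simp only [swap_apply_apply, map_mul, h]

theorem map_swap_eq_of_nodup {x y z w a b c d : α} (hx : [x, y, z, w].Nodup)
    (ha : [a, b, c, d].Nodup) (h : φ (swap x y) = φ (swap z w)) :
    φ (swap a b) = φ (swap c d) := by
  obtain ⟨σ, hσ⟩ := exists_perm_map_eq_of_nodup hx ha rfl
  simp only [List.map_cons, List.map_nil, List.cons.injEq, and_true] at hσ
  obtain ⟨rfl, rfl, rfl, rfl⟩ := hσ
  exact map_swap_apply_eq_of_map_swap_eq h σ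

theorem map_swap_eq_of_nodup_of_common {x y z a b c : α} (hx : [x, y, z].Nodup)
    (ha : [a, b, c].Nodup) (h : φ (swap x y) = φ (swap y z)) :
    φ (swap a b) = φ (swap b c) := by
  obtain ⟨σ, hσ⟩ := exists_perm_map_eq_of_nodup hx ha rfl
  simp only [List.map_cons, List.map_nil, List.cons.injEq, and_true] at hσ
  obtain ⟨rfl, rfl, rfl⟩ := hσ
  exact map_swap_apply_eq_of_map_swap_eq h σ

theorem injOn_isSwap_of_map_swap_ne {a b c d : α} (ha : [a, b, c, d].Nodup)
    (hne : φ (swap a b) ≠ φ (swap c d)) : Set.InjOn φ {σ | σ.IsSwap} := by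
  have common {x y z : α} (hx : [x, y, z].Nodup) : φ (swap x y) ≠ φ (swap y z) := fun h =>
    hne <| (map_swap_eq_of_nodup_of_common hx (by grind) h).trans
      (map_swap_eq_of_nodup_of_common hx (by grind) h)
  rintro _ ⟨x, y, hxy, rfl⟩ _ ⟨z, w, hzw, rfl⟩ h
  by_contra hswap
  by_cases hx : [x, y, z, w].Nodup
  · exact hne (map_swap_eq_of_nodup hx ha h)
  · have : x = z ∨ x = w ∨ y = z ∨ y = w := by grind
    rcases this with rfl | rfl | rfl | rfl
    · exact common (x := y) (y := x) (z := w) (by grind) (by rwa [swap_comm y])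
    · exact common (x := y) (y := x) (z := z) (by grind) (by rwa [swap_comm y, swap_comm x z])
    · exact common (x := x) (y := y) (z := w) (by grind) h
    · exact common (x := x) (y := y) (z := z) (by grind) (by rwa [swap_comm y z])

theorem map_swap_ne_one_of_injOn_isSwap [Fintype α] (hα : 3 ≤ Fintype.card α)
    (hφ : Set.InjOn φ {σ | σ.IsSwap}) {x y : α} (hxy : x ≠ y) : φ (swap x y) ≠ 1 := by
  intro h
  obtain ⟨z, hzx, hzy⟩ := ENat.exists_ne_ne_of_three_le (by simpa using hα) x y
  have hzz : φ (swap z z) = 1 := by rw [swap_self, ← Perm.one_def, map_one]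
  have hzy' : φ (swap z y) = 1 := by
    have := map_swap_apply_eq_of_map_swap_eq (h.trans hzz.symm) (swap x z)
    rwa [swap_apply_left, swap_apply_of_ne_of_ne hxy.symm hzy.symm, swap_apply_right, swap_self,
      ← Perm.one_def, map_one] at this
  exact swap_ne_swap_of_ne_of_ne hxy hzx.symm hxy
    (hφ ⟨x, y, hxy, rfl⟩ ⟨z, y, hzy, rfl⟩ (h.trans hzy'.symm))

theorem commute_swap_ofSubtype {p : α → Prop} [DecidablePred p] {x y : α} (hx : ¬ p x)
    (hy : ¬ p y) (g : Perm (Subtype p)) : Commute (swap x y) (ofSubtype g) := by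
  rw [commute_iff_eq, mul_swap_eq_swap_mul, ofSubtype_apply_of_not_mem g hx,
    ofSubtype_apply_of_not_mem g hy]

end Swaps

theorem sum_sum_eq_two_nsmul {α M : Type*} [Fintype α] [DecidableEq α] [AddCommMonoid M]
    {f : α → α → M} {x y : α} (hxy : x ≠ y) (hsymm : ∀ z w, f z w = f w z) (hself : ∀ z, f z z = 0)
    (hcompl : ∀ z ∈ ({x, y}ᶜ : Finset α), ∀ w ∈ ({x, y}ᶜ : Finset α), f z w = 0) :
    ∑ z, ∑ w, f z w = 2 • (f x y + ∑ z ∈ {x, y}ᶜ, (f x z + f y z)) := by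
  have hsplit (g : α → M) : ∑ z, g z = g x + g y + ∑ z ∈ {x, y}ᶜ, g z := by
    rw [← Finset.sum_add_sum_compl {x, y}, Finset.sum_pair hxy]
  have hrow {z : α} (hz : z ∈ ({x, y}ᶜ : Finset α)) : ∑ w, f z w = f x z + f y z := by
    rw [hsplit, Finset.sum_eq_zero (hcompl z hz), add_zero, hsymm z x, hsymm z y]
  rw [hsplit, hsplit (f x), hsplit (f y), Finset.sum_congr rfl fun z hz => hrow hz, hself, hself,
    hsymm y x, zero_add, add_zero, Finset.sum_add_distrib, two_nsmul]
  abel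

section Antisymmetrizer

open Equiv Equiv.Perm LinearMap Module

variable {α K V : Type*} [DecidableEq α] [Field K] [AddCommGroup V] [Module K V]

/-- The operator `1 - (x y)` of a representation of a symmetric group. It vanishes for `x = y`;
otherwise, where `2` is invertible, it is twice the projection onto the `-1`-eigenspace of
`ρ (x y)` along the `1`-eigenspace. -/
def swapAntisymmetrizer (ρ : Representation K (Perm α) V) (x y : α) : End K V :=
  1 - ρ (swap x y)

variable (ρ : Representation K (Perm α) V)

@[simp]
theorem swapAntisymmetrizer_self (x : α) : swapAntisymmetrizer ρ x x = 0 := by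
  rw [swapAntisymmetrizer, swap_self, ← Perm.one_def, map_one, sub_self]

theorem swapAntisymmetrizer_comm (x y : α) :
    swapAntisymmetrizer ρ x y = swapAntisymmetrizer ρ y x := by
  rw [swapAntisymmetrizer, swapAntisymmetrizer, Equiv.swap_comm]

theorem one_sub_swapAntisymmetrizer (x y : α) :
    1 - swapAntisymmetrizer ρ x y = ρ (swap x y) :=
  sub_sub_cancel _ _

theorem swapAntisymmetrizer_mul_self (x y : α) :
    swapAntisymmetrizer ρ x y * swapAntisymmetrizer ρ x y =
      (2 : K) • swapAntisymmetrizer ρ x y := by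
  have hsq : ρ (swap x y) * ρ (swap x y) = 1 := by rw [← map_mul, Equiv.swap_mul_self, map_one]
  rw [swapAntisymmetrizer, sub_mul, mul_sub, mul_sub, hsq]
  simp only [mul_one, one_mul, two_smul]
  abel

theorem finrank_range_swapAntisymmetrizer_le [Module.Finite K V] {x y z w : α} (hxy : x ≠ y)
    (hzw : z ≠ w) :
    finrank K (range (swapAntisymmetrizer ρ x y)) ≤
      finrank K (range (swapAntisymmetrizer ρ z w)) := by
  obtain ⟨g, hg⟩ := isConj_iff.mp (isConj_swap hzw hxy)
  have hconj : swapAntisymmetrizer ρ x y = ρ g ∘ₗ (swapAntisymmetrizer ρ z w ∘ₗ ρ g⁻¹) := by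
    ext v
    simp [swapAntisymmetrizer, ← hg]
  rw [hconj, range_comp]
  exact (Submodule.finrank_map_le _ _).trans (Submodule.finrank_mono (range_comp_le_range _ _))

/-- The tensor product of a representation of a symmetric group with the sign character. -/
def signTwist [Fintype α] : Representation K (Perm α) V where
  toFun σ := sign σ • ρ σ
  map_one' := by simp
  map_mul' σ τ := by rw [map_mul, map_mul, smul_mul_smul_comm]

theorem signTwist_swap [Fintype α] {x y : α} (hxy : x ≠ y) :
    signTwist ρ (swap x y) = -ρ (swap x y) := by
  simp [signTwist, sign_swap hxy]

theorem swapAntisymmetrizer_signTwist [Fintype α] {x y : α} (hxy : x ≠ y) :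
    swapAntisymmetrizer (signTwist ρ) x y = 1 + ρ (swap x y) := by
  rw [swapAntisymmetrizer, signTwist_swap ρ hxy, sub_neg_eq_add]

variable {ρ}

theorem injOn_isSwap_signTwist [Fintype α] (hρ : Set.InjOn ρ {σ | σ.IsSwap}) :
    Set.InjOn (signTwist ρ) {σ | σ.IsSwap} := by
  rintro _ ⟨x, y, hxy, rfl⟩ _ ⟨z, w, hzw, rfl⟩ h
  rw [signTwist_swap ρ hxy, signTwist_swap ρ hzw, neg_inj] at h
  exact hρ ⟨x, y, hxy, rfl⟩ ⟨z, w, hzw, rfl⟩ h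

end Antisymmetrizer

section Reflections

open Equiv Equiv.Perm LinearMap Module

variable {α K V : Type*} [DecidableEq α] [Field K] [AddCommGroup V] [Module K V]
  [Module.Finite K V] {ρ : Representation K (Perm α) V}

theorem swapAntisymmetrizer_mul_eq_zero [NeZero (2 : K)] (hρ : Set.InjOn ρ {σ | σ.IsSwap})
    (hrank : ∀ x y, finrank K (range (swapAntisymmetrizer ρ x y)) ≤ 1) {x y z w : α}
    (h : [x, y, z, w].Nodup) : swapAntisymmetrizer ρ z w * swapAntisymmetrizer ρ x y = 0 := by
  have hcomm : Commute (swap z w) (swap x y) := by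
    rw [commute_iff_eq, mul_swap_eq_swap_mul, swap_apply_of_ne_of_ne, swap_apply_of_ne_of_ne] <;>
      grind
  refine mul_eq_zero_of_commute_of_rank_le_one (hrank z w) (hrank x y)
    (swapAntisymmetrizer_mul_self ρ z w) (swapAntisymmetrizer_mul_self ρ x y)
    ((Commute.one_left _).sub_left ((Commute.one_right _).sub_right (hcomm.map ρ))) fun heq => ?_
  exact swap_ne_swap_of_ne_of_ne (by grind) (by grind) (by grind)
    (hρ ⟨z, w, by grind, rfl⟩ ⟨x, y, by grind, rfl⟩ (sub_right_injective heq))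

theorem swapAntisymmetrizer_add_mul (hρ : Set.InjOn ρ {σ | σ.IsSwap})
    (hrank : ∀ x y, finrank K (range (swapAntisymmetrizer ρ x y)) ≤ 1) {x y z : α}
    (h : [x, y, z].Nodup) :
    (swapAntisymmetrizer ρ x z + swapAntisymmetrizer ρ y z) * swapAntisymmetrizer ρ x y =
      swapAntisymmetrizer ρ x y := by
  set A := swapAntisymmetrizer ρ x y with hA
  set B := swapAntisymmetrizer ρ x z with hB
  set C := swapAntisymmetrizer ρ y z with hC
  obtain ⟨hxy, hxz, hyz⟩ : x ≠ y ∧ x ≠ z ∧ y ≠ z := by grind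
  have hAA : A * A = (2 : K) • A := swapAntisymmetrizer_mul_self ρ x y
  have hBB : B * B = (2 : K) • B := swapAntisymmetrizer_mul_self ρ x z
  have hconj : (1 - A) * (1 - B) * (1 - A) = 1 - C := by
    simp only [hA, hB, hC, one_sub_swapAntisymmetrizer, ← map_mul]
    rw [Equiv.swap_comm x z, swap_mul_swap_mul_swap hxz.symm hyz.symm]
  have hconj' : (1 - B) * (1 - A) * (1 - B) = 1 - C := by
    simp only [hA, hB, hC, one_sub_swapAntisymmetrizer, ← map_mul]
    rw [Equiv.swap_comm x y, swap_mul_swap_mul_swap hxy.symm hyz, Equiv.swap_comm]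
  have hne : A ≠ B := fun heq => swap_ne_swap_of_ne_of_ne hxy.symm hxy.symm hyz <|
    (Equiv.swap_comm y x).trans (hρ ⟨x, y, hxy, rfl⟩ ⟨x, z, hxz, rfl⟩ (sub_right_injective heq))
  have hABA : A * B * A = A :=
    mul_mul_eq_self_of_braid_of_rank_le_one (hrank x y) (hrank x z) hAA hBB
      (hconj.trans hconj'.symm) hne
  have hA' : (1 - A) * A = -A := by
    rw [sub_mul, one_mul, hAA, two_smul]
    abel
  calc (B + C) * A = B * A + A - (1 - C) * A := by noncomm_ring
    _ = B * A + A + (1 - A) * (1 - B) * A := by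
      rw [← hconj, mul_assoc _ (1 - A) A, hA', mul_neg, sub_neg_eq_add]
    _ = A + (1 - A) * A + A * B * A := by noncomm_ring
    _ = A := by rw [hA', hABA, add_neg_cancel, zero_add]

variable [Fintype α]

theorem sum_swapAntisymmetrizer_mul [NeZero (2 : K)] (hρ : Set.InjOn ρ {σ | σ.IsSwap})
    (hrank : ∀ x y, finrank K (range (swapAntisymmetrizer ρ x y)) ≤ 1) (x y : α) :
    (∑ z, ∑ w, swapAntisymmetrizer ρ z w) * swapAntisymmetrizer ρ x y =
      (2 * Fintype.card α : K) • swapAntisymmetrizer ρ x y := by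
  rcases eq_or_ne x y with rfl | hxy
  · simp
  set A := swapAntisymmetrizer ρ x y
  have hcard : (({x, y}ᶜ : Finset α).card : K) = Fintype.card α - 2 := by
    rw [Finset.card_compl, Finset.card_pair hxy, Nat.cast_sub, Nat.cast_two]
    exact Finset.card_pair hxy ▸ Finset.card_le_univ {x, y}
  have hmem {z : α} : z ∈ ({x, y}ᶜ : Finset α) ↔ z ≠ x ∧ z ≠ y := by simp
  have hmeet {z : α} (hz : z ∈ ({x, y}ᶜ : Finset α)) :
      swapAntisymmetrizer ρ x z * A + swapAntisymmetrizer ρ y z * A = A := by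
    rw [hmem] at hz
    rw [← add_mul]
    exact swapAntisymmetrizer_add_mul hρ hrank (by grind)
  have hdisjoint {z w : α} (hz : z ∈ ({x, y}ᶜ : Finset α)) (hw : w ∈ ({x, y}ᶜ : Finset α)) :
      swapAntisymmetrizer ρ z w * A = 0 := by
    rcases eq_or_ne z w with rfl | hzw
    · rw [swapAntisymmetrizer_self, zero_mul]
    · rw [hmem] at hz hw
      exact swapAntisymmetrizer_mul_eq_zero hρ hrank (by grind)
  calc (∑ z, ∑ w, swapAntisymmetrizer ρ z w) * A
      = ∑ z, ∑ w, swapAntisymmetrizer ρ z w * A := by simp only [Finset.sum_mul]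
    _ = 2 • (swapAntisymmetrizer ρ x y * A + ∑ z ∈ {x, y}ᶜ,
          (swapAntisymmetrizer ρ x z * A + swapAntisymmetrizer ρ y z * A)) :=
        sum_sum_eq_two_nsmul hxy (fun z w => by rw [swapAntisymmetrizer_comm])
          (fun z => by rw [swapAntisymmetrizer_self, zero_mul]) fun z hz w hw => hdisjoint hz hw
    _ = 2 • ((2 : K) • A + ({x, y}ᶜ : Finset α).card • A) := by
        rw [swapAntisymmetrizer_mul_self, Finset.sum_congr rfl fun z hz => hmeet hz,
          Finset.sum_const]
    _ = (2 * Fintype.card α : K) • A := by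
        rw [← Nat.cast_smul_eq_nsmul K, ← Nat.cast_smul_eq_nsmul K, hcard]
        module

theorem trace_sum_swapAntisymmetrizer (hα : 3 ≤ Fintype.card α)
    (hρ : Set.InjOn ρ {σ | σ.IsSwap})
    (hrank : ∀ x y, finrank K (range (swapAntisymmetrizer ρ x y)) ≤ 1) :
    trace K V (∑ x, ∑ y, swapAntisymmetrizer ρ x y) =
      2 * Fintype.card α * (Fintype.card α - 1) := by
  have htrace (x y : α) : trace K V (swapAntisymmetrizer ρ x y) = if x = y then 0 else 2 := by
    split_ifs with hxy
    · simp [hxy]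
    · exact trace_eq_two_of_rank_le_one (hrank x y) (swapAntisymmetrizer_mul_self ρ x y)
        (sub_ne_zero.mpr (map_swap_ne_one_of_injOn_isSwap hα hρ hxy).symm)
  have hrow (x : α) : ∑ y, trace K V (swapAntisymmetrizer ρ x y) = 2 * (Fintype.card α - 1) := by
    simp only [htrace, Finset.sum_ite, Finset.sum_const_zero, zero_add, Finset.sum_const,
      Finset.filter_ne, Finset.card_erase_of_mem (Finset.mem_univ x), Finset.card_univ,
      nsmul_eq_mul]
    rw [Nat.cast_pred (by omega), mul_comm]
  simp only [map_sum, hrow, Finset.sum_const, Finset.card_univ, nsmul_eq_mul]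
  ring

theorem card_le_finrank_add_one_of_finrank_range_le_one [CharZero K] (hα : 3 ≤ Fintype.card α)
    (hρ : Set.InjOn ρ {σ | σ.IsSwap})
    (hrank : ∀ x y, finrank K (range (swapAntisymmetrizer ρ x y)) ≤ 1) :
    Fintype.card α ≤ finrank K V + 1 := by
  set T := ∑ x, ∑ y, swapAntisymmetrizer ρ x y with hT
  set c : K := 2 * Fintype.card α with hc
  have hc0 : c ≠ 0 := by
    have : Fintype.card α ≠ 0 := by omega
    simpa [hc] using this
  have hTT : T * T = c • T := by
    nth_rw 2 [hT]
    simp only [Finset.mul_sum, sum_swapAntisymmetrizer_mul hρ hrank, ← Finset.smul_sum, hT, hc]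
  have hidem : IsIdempotentElem (c⁻¹ • T) := by
    rw [IsIdempotentElem, smul_mul_smul_comm, hTT, smul_smul, mul_assoc, inv_mul_cancel₀ hc0,
      mul_one]
  have hfinrank : (finrank K (range (c⁻¹ • T)) : K) = Fintype.card α - 1 := by
    rw [← ((isProj_range_iff_isIdempotentElem _).mpr hidem).trace, map_smul,
      trace_sum_swapAntisymmetrizer hα hρ hrank, smul_eq_mul, ← hc,
      inv_mul_cancel_left₀ hc0]
  have : Fintype.card α = finrank K (range (c⁻¹ • T)) + 1 := by
    exact_mod_cast (eq_add_of_sub_eq hfinrank.symm)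
  have := finrank_range_le (c⁻¹ • T)
  omega

end Reflections

section LowerBound

open Equiv Equiv.Perm LinearMap Module

section Restrict

variable {G K V : Type*} [Monoid G] [CommRing K] [AddCommGroup V] [Module K V]

/-- The representation on the range of an endomorphism that commutes with the given one. -/
def rangeRepresentation (ρ : Representation K G V) (A : End K V) (hA : ∀ g, Commute (ρ g) A) :
    Representation K G (range A) :=
  ρ.subrepresentation (range A) fun g => by
    rintro _ ⟨v, rfl⟩
    exact ⟨ρ g v, (LinearMap.congr_fun (hA g).eq v).symm⟩

theorem mul_eq_mul_of_rangeRepresentation_eq {ρ : Representation K G V} {A : End K V}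
    {hA : ∀ g, Commute (ρ g) A} {g h : G}
    (heq : rangeRepresentation ρ A hA g = rangeRepresentation ρ A hA h) :
    ρ g * A = ρ h * A :=
  LinearMap.ext fun v =>
    congrArg Subtype.val (LinearMap.congr_fun heq ⟨A v, mem_range_self A v⟩)

theorem map_swap_mul_eq_of_not_injOn_isSwap {α : Type*} [DecidableEq α] {p : α → Prop}
    [DecidablePred p] {ρ : Representation K (Perm α) V} {A : End K V}
    (hA : ∀ g : Perm (Subtype p), Commute (ρ (ofSubtype g)) A)
    (h : ¬ Set.InjOn (rangeRepresentation (ρ.comp ofSubtype) A hA) {σ | σ.IsSwap})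
    {a b c d : Subtype p} (ha : [a, b, c, d].Nodup) :
    ρ (swap ↑a ↑b) * A = ρ (swap ↑c ↑d) * A := by
  have heq := mul_eq_mul_of_rangeRepresentation_eq
    (not_imp_comm.mp (injOn_isSwap_of_map_swap_ne ha) h)
  simpa only [MonoidHom.comp_apply, ofSubtype_swap_eq] using heq

end Restrict

variable {α K V : Type*} [DecidableEq α] [Fintype α] [Field K] [CharZero K] [AddCommGroup V]
  [Module K V] [Module.Finite K V] {ρ : Representation K (Perm α) V}

theorem two_le_finrank_range_swapAntisymmetrizer (hα : 3 ≤ Fintype.card α)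
    (hρ : Set.InjOn ρ {σ | σ.IsSwap}) (hV : finrank K V + 1 < Fintype.card α) {x y : α}
    (hxy : x ≠ y) : 2 ≤ finrank K (range (swapAntisymmetrizer ρ x y)) := by
  by_contra! hlt
  refine hV.not_ge (card_le_finrank_add_one_of_finrank_range_le_one hα hρ fun z w => ?_)
  rcases eq_or_ne z w with rfl | hzw
  · rw [swapAntisymmetrizer_self, range_zero, finrank_bot]
    exact zero_le_one
  · exact (finrank_range_swapAntisymmetrizer_le ρ hzw hxy).trans (Nat.le_of_lt_succ hlt)

theorem card_le_finrank_add_one_of_injOn_isSwap (hα : 3 ≤ Fintype.card α)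
    (hρ : Set.InjOn ρ {σ | σ.IsSwap}) : Fintype.card α ≤ finrank K V + 1 := by
  induction h : Fintype.card α using Nat.strong_induction_on generalizing α V with
  | _ n ih =>
  subst h
  by_contra! hV
  obtain ⟨x, y, hxy⟩ := Fintype.exists_pair_of_one_lt_card (by omega : 1 < Fintype.card α)
  have hneg := two_le_finrank_range_swapAntisymmetrizer hα hρ hV hxy
  have hpos := two_le_finrank_range_swapAntisymmetrizer hα (injOn_isSwap_signTwist hρ) hV hxy
  rw [swapAntisymmetrizer_signTwist _ hxy] at hpos
  rw [swapAntisymmetrizer] at hneg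
  have hsum := finrank_range_one_sub_add_finrank_range_one_add_le
    (A := ρ (swap x y)) (by rw [← map_mul, Equiv.swap_mul_self, map_one])
  set s : Finset α := {x, y}ᶜ with hs
  have hcard : Fintype.card s = Fintype.card α - 2 := by
    rw [Fintype.card_coe, hs, Finset.card_compl, Finset.card_pair hxy]
  obtain ⟨e⟩ := Function.Embedding.nonempty_of_card_le
    (by rw [Fintype.card_fin]; omega : Fintype.card (Fin 4) ≤ Fintype.card s)
  have he : [e 0, e 1, e 2, e 3].Nodup := by simp
  have hcomm (g : Perm s) : Commute (ρ (ofSubtype g)) (ρ (swap x y)) :=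
    (commute_swap_ofSubtype (by simp [hs]) (by simp [hs]) g).symm.map ρ
  have hrestrict {A : End K V} (hA : ∀ g : Perm s, Commute (ρ (ofSubtype g)) A)
      (hfin : finrank K (range A) + 2 ≤ finrank K V) :
      ρ (swap ↑(e 0) ↑(e 1)) * A = ρ (swap ↑(e 2) ↑(e 3)) * A := by
    refine map_swap_mul_eq_of_not_injOn_isSwap hA (fun hinj => ?_) he
    have := ih _ (by omega) (by omega) hinj rfl
    omega
  have heq_neg := hrestrict (fun g => (Commute.one_right _).sub_right (hcomm g)) (by omega)
  have heq_pos := hrestrict (fun g => (Commute.one_right _).add_right (hcomm g)) (by omega)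
  have heq : ρ (swap ↑(e 0) ↑(e 1)) = ρ (swap ↑(e 2) ↑(e 3)) := by
    refine smul_right_injective _ (two_ne_zero (α := K)) ?_
    have := congrArg₂ (· + ·) heq_neg heq_pos
    simpa [← mul_add, ← two_smul K] using this
  exact swap_ne_swap_of_ne_of_ne (by simp) (by simp) (by simp)
    (hρ ⟨_, _, by simp, rfl⟩ ⟨_, _, by simp, rfl⟩ heq)

omit [DecidableEq α] in
theorem card_le_finrank_add_one_of_injective (hρ : Function.Injective ρ) :
    Fintype.card α ≤ finrank K V + 1 := by
  classical
  rcases le_or_gt 3 (Fintype.card α) with hα | hα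
  · exact card_le_finrank_add_one_of_injOn_isSwap hα hρ.injOn
  by_contra! hV
  have : Subsingleton V := finrank_zero_iff.mp (by omega : finrank K V = 0)
  have : Subsingleton (Perm α) := hρ.subsingleton
  have := Fintype.card_le_one_iff_subsingleton.mpr this
  rw [Fintype.card_perm] at this
  have := Nat.self_le_factorial (Fintype.card α)
  omega

end LowerBound

section StandardRepresentation

open Equiv LinearMap Module

variable (K α : Type*) [Field K]

/-- The representation of `Perm α` on functions `α → K` by permutation of the coordinates. -/
def permutationRepresentation : Representation K (Perm α) (α → K) where
  toFun σ := funLeft K K ⇑σ⁻¹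
  map_one' := by ext; simp
  map_mul' σ τ := by ext; simp

variable [Fintype α]

/-- The subspace of `α → K` underlying the standard representation: the functions whose values
sum to zero. -/
def sumZeroSubmodule : Submodule K (α → K) :=
  ker (∑ i, proj (R := K) (φ := fun _ : α => K) i)

variable {K α}

theorem mem_sumZeroSubmodule {v : α → K} : v ∈ sumZeroSubmodule K α ↔ ∑ i, v i = 0 := by
  simp [sumZeroSubmodule]

theorem single_sub_single_mem_sumZeroSubmodule [DecidableEq α] (i j : α) :
    Pi.single i 1 - Pi.single j 1 ∈ sumZeroSubmodule K α := by
  simp [mem_sumZeroSubmodule]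

variable (K α)

theorem finrank_sumZeroSubmodule [Nonempty α] :
    finrank K (sumZeroSubmodule K α) = Fintype.card α - 1 := by
  classical
  obtain ⟨i⟩ := ‹Nonempty α›
  have hne : ∑ i, proj (R := K) (φ := fun _ : α => K) i ≠ 0 := fun h => by
    simpa using LinearMap.congr_fun h (Pi.single i 1)
  have := Module.Dual.finrank_ker_add_one_of_ne_zero hne
  rw [finrank_fintype_fun_eq_card] at this
  exact Nat.eq_sub_of_add_eq this

/-- The standard representation of the symmetric group on `α`. -/
def standardRepresentation : Representation K (Perm α) (sumZeroSubmodule K α) :=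
  (permutationRepresentation K α).subrepresentation (sumZeroSubmodule K α) fun σ v hv => by
    rw [Submodule.mem_comap, mem_sumZeroSubmodule]
    rw [mem_sumZeroSubmodule] at hv
    exact (Equiv.sum_comp σ⁻¹ v).trans hv

theorem standardRepresentation_injective [NeZero (2 : K)] :
    Function.Injective (standardRepresentation K α) := by
  classical
  refine (injective_iff_map_eq_one _).mpr fun σ hσ => Equiv.ext fun i => ?_
  by_contra (hi : σ i ≠ i)
  let v : sumZeroSubmodule K α :=
    ⟨Pi.single i 1 - Pi.single (σ i) 1, single_sub_single_mem_sumZeroSubmodule i (σ i)⟩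
  have hv : standardRepresentation K α σ v = v := by rw [hσ, End.one_apply]
  have hvi : (v : α → K) (σ⁻¹ (σ i)) = (v : α → K) (σ i) :=
    congrFun (congrArg Subtype.val hv) (σ i)
  have : (1 : K) = -1 := by simpa [v, hi, hi.symm] using hvi
  exact NeZero.ne (2 : K) (by linear_combination this)

end StandardRepresentation

section MatrixRepresentation

open Module LinearMap

variable {K : Type*} [Field K]

theorem exists_injective_monoidHom_GL {G V : Type*} [Group G] [AddCommGroup V] [Module K V]
    [Module.Finite K V] {ρ : Representation K G V} (hρ : Function.Injective ρ) :
    ∃ φ : G →* GL (Fin (finrank K V)) K, Function.Injective φ := by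
  let e := Matrix.GeneralLinearGroup.toLin' (finBasis K V)
  refine ⟨(e.symm : _ →* _).comp ρ.asGroupHom, e.symm.injective.comp fun g h hgh => hρ ?_⟩
  simpa only [Representation.asGroupHom_apply] using congrArg Units.val hgh

theorem symmetricGroup_min_faithful_rep_dim_general [CharZero K] (n : ℕ) (hn : n ≠ 0) :
    (∀ (d : ℕ) (φ : Equiv.Perm (Fin n) →* GL (Fin d) K),
        Function.Injective φ → n - 1 ≤ d) ∧
    ∃ φ : Equiv.Perm (Fin n) →* GL (Fin (n - 1)) K, Function.Injective φ := by
  constructor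
  · intro d φ hφ
    let ρ : Representation K (Equiv.Perm (Fin n)) (Fin d → K) :=
      (Matrix.toLinAlgEquiv' : _ ≃ₐ[K] _).toMonoidHom.comp ((Units.coeHom _).comp φ)
    have hρ : Function.Injective ρ :=
      Matrix.toLinAlgEquiv'.injective.comp (Units.val_injective.comp hφ)
    simpa using card_le_finrank_add_one_of_injective hρ
  · have : Nonempty (Fin n) := Fin.pos_iff_nonempty.mp (Nat.pos_of_ne_zero hn)
    have hdim := finrank_sumZeroSubmodule K (Fin n)
    rw [Fintype.card_fin] at hdim
    exact hdim ▸ exists_injective_monoidHom_GL (standardRepresentation_injective K (Fin n))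

end MatrixRepresentation

theorem symmetricGroup_min_faithful_rep_dim (n : ℕ) (hn : 5 ≤ n) :
    (∀ (d : ℕ) (φ : Equiv.Perm (Fin n) →* GL (Fin d) ℂ),
        Function.Injective φ → n - 1 ≤ d) ∧
    ∃ φ : Equiv.Perm (Fin n) →* GL (Fin (n - 1)) ℂ, Function.Injective φ :=
  symmetricGroup_min_faithful_rep_dim_general n (by omega)
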